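/- The general rules of SKSg reduce to atomic form: the rule i↓ is derivable from {ai↓, s}, the rule w↓ is derivable from {aw↓, s}, and the rule c↓ is derivable from {ac↓, m}; dually, i↑ is derivable from {ai↑, s}, w↑ from {aw↑, s}, and c↑ from {ac↑, m}. Here a rule ρ is derivable from a set S of rules if for every instance of ρ with premise P and conclusion Q there exists a derivation from P to Q using only rules of S. -/

import Mathlib

/-!
Derivability from a fixed set of rules is a preorder compatible with both connectives, so it
suffices to derive each general rule at the root, by induction on the formula `P` it introduces,
cuts, weakens or contracts. Atoms are handled by the atomic rule, and compound formulas by combining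
the derivations for the two components:

* for `i↓` and `i↑`, two switches turn `([A,B],[C,D])` into `[[A,C],(B,D)]` and
  `([A,B],(C,D))` into `[(A,C),(B,D)]`;
* for `w↓` and `w↑`, the unit laws suffice, except that passing from `f` to `t`
  takes a switch: `f = (f,[t,t])` yields `[(f,t),t] = t`;
* for `c↓` and `c↑`, medial distributes the contraction over the connective for which
  associativity and commutativity do not.
-/

/-!
Deep-inference systems SKSg, SKS and KS for classical propositional logic
(the calculus of structures).  Formulas are built from atoms `a`, their
negations `ā`, and the units `t` (true) and `f` (false) by disjunction
`[P,Q]` (`dis`) and conjunction `(P,Q)` (`con`), and are considered modulo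
the congruence `Equiv` generated by associativity, commutativity and the
unit laws.  Rules apply inside an arbitrary one-hole context and modulo the
equivalence.
-/

namespace DI

/-- Formulas of the calculus of structures for classical logic:
units `t`, `f`; atoms `pos a`; negated atoms `neg a`; disjunction `dis`
(written `[P,Q]`); conjunction `con` (written `(P,Q)`). -/
inductive F : Type where
  | tt  : F
  | ff  : F
  | pos : ℕ → F
  | neg : ℕ → F
  | dis : F → F → F
  | con : F → F → F
deriving DecidableEq

/-- Negation, pushed to the atoms by the De Morgan laws:
`¬t = f`, `¬f = t`, `¬[P,Q] = (¬P,¬Q)`, `¬(P,Q) = [¬P,¬Q]`, `¬¬P = P`. -/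
def F.negF : F → F
  | .tt => .ff
  | .ff => .tt
  | .pos a => .neg a
  | .neg a => .pos a
  | .dis P Q => .con P.negF Q.negF
  | .con P Q => .dis P.negF Q.negF

/-- Atoms are the propositional symbols and their negations. -/
def F.isAtom : F → Prop
  | .pos _ => True
  | .neg _ => True
  | _ => False

/-- Syntactic equivalence of formulas: the smallest congruence generated by
associativity and commutativity of both connectives and the unit laws
`[t,t]=t`, `(f,f)=f`, `[f,P]=P`, `(t,P)=P`. -/
inductive Equiv : F → F → Prop where
  | refl (P : F) : Equiv P P
  | symm {P Q : F} : Equiv P Q → Equiv Q P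
  | trans {P Q R : F} : Equiv P Q → Equiv Q R → Equiv P R
  | disComm (P Q : F) : Equiv (.dis P Q) (.dis Q P)
  | conComm (P Q : F) : Equiv (.con P Q) (.con Q P)
  | disAssoc (P Q R : F) : Equiv (.dis (.dis P Q) R) (.dis P (.dis Q R))
  | conAssoc (P Q R : F) : Equiv (.con (.con P Q) R) (.con P (.con Q R))
  | ttDis : Equiv (.dis .tt .tt) .tt
  | ffCon : Equiv (.con .ff .ff) .ff
  | ffDis (P : F) : Equiv (.dis .ff P) P
  | ttCon (P : F) : Equiv (.con .tt P) P
  | disCongr {P P' Q Q' : F} :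
      Equiv P P' → Equiv Q Q' → Equiv (.dis P Q) (.dis P' Q')
  | conCongr {P P' Q Q' : F} :
      Equiv P P' → Equiv Q Q' → Equiv (.con P Q) (.con P' Q')

/-- One-hole contexts. -/
inductive Ctx : Type where
  | hole : Ctx
  | disL : Ctx → F → Ctx
  | disR : F → Ctx → Ctx
  | conL : Ctx → F → Ctx
  | conR : F → Ctx → Ctx

/-- Plugging a formula into the hole of a context. -/
def Ctx.fill : Ctx → F → F
  | .hole, P => P
  | .disL C Q, P => .dis (C.fill P) Q
  | .disR Q C, P => .dis Q (C.fill P)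
  | .conL C Q, P => .con (C.fill P) Q
  | .conR Q C, P => .con Q (C.fill P)

/-- Names of the inference rules of SKSg and SKS. -/
inductive Rule : Type where
  | iDown | iUp | wDown | wUp | cDown | cUp | s | m
  | aiDown | aiUp | awDown | awUp | acDown | acUp
deriving DecidableEq

/-- The rules, read at the root of a formula (premise on the left,
conclusion on the right). -/
inductive RootStep : Rule → F → F → Prop where
  | iDown (P : F) : RootStep .iDown .tt (.dis P P.negF)
  | iUp (P : F) : RootStep .iUp (.con P P.negF) .ff
  | wDown (P : F) : RootStep .wDown .ff P
  | wUp (P : F) : RootStep .wUp P .tt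
  | cDown (P : F) : RootStep .cDown (.dis P P) P
  | cUp (P : F) : RootStep .cUp P (.con P P)
  | s (P Q R : F) : RootStep .s (.con P (.dis Q R)) (.dis (.con P Q) R)
  | m (P Q R S : F) :
      RootStep .m (.dis (.con P Q) (.con R S)) (.con (.dis P R) (.dis Q S))
  | aiDown (A : F) (h : A.isAtom) : RootStep .aiDown .tt (.dis A A.negF)
  | aiUp (A : F) (h : A.isAtom) : RootStep .aiUp (.con A A.negF) .ff
  | awDown (A : F) (h : A.isAtom) : RootStep .awDown .ff A
  | awUp (A : F) (h : A.isAtom) : RootStep .awUp A .tt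
  | acDown (A : F) (h : A.isAtom) : RootStep .acDown (.dis A A) A
  | acUp (A : F) (h : A.isAtom) : RootStep .acUp A (.con A A)

/-- One inference step using a rule from the set `Rs`, applied inside an
arbitrary context and modulo the equivalence. -/
def Step (Rs : Set Rule) (P Q : F) : Prop :=
  ∃ r ∈ Rs, ∃ (C : Ctx) (P' Q' : F),
    RootStep r P' Q' ∧ Equiv P (C.fill P') ∧ Equiv (C.fill Q') Q

/-- Derivations over an arbitrary step relation: a finite sequence of rule
instances from the premise to the conclusion (modulo the equivalence). -/
inductive Deriv (St : F → F → Prop) : F → F → Prop where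
  | eqv {P Q : F} : Equiv P Q → Deriv St P Q
  | step {P Q R : F} : St P Q → Deriv St Q R → Deriv St P R

/-- The system SKSg: general (non-atomic) rules plus switch. -/
def SKSg : Set Rule := {.iDown, .iUp, .wDown, .wUp, .cDown, .cUp, .s}

/-- The system SKS: atomic rules plus switch and medial. -/
def SKS : Set Rule := {.aiDown, .aiUp, .awDown, .awUp, .acDown, .acUp, .s, .m}

/-- The system KS: the down fragment of SKS. -/
def KS : Set Rule := {.aiDown, .awDown, .acDown, .s, .m}

/-- A proof of `Q` in the system `Rs` is a derivation from the unit `t` to `Q`. -/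
def Proof (Rs : Set Rule) (Q : F) : Prop := Deriv (Step Rs) .tt Q

/-- A rule `r` is derivable from a set `Rs` of rules if every instance of `r`
(with premise `P` and conclusion `Q`) can be replaced by a derivation from
`P` to `Q` using only rules of `Rs`. -/
def RuleDerivable (r : Rule) (Rs : Set Rule) : Prop :=
  ∀ P Q : F, Step {r} P Q → Deriv (Step Rs) P Q

end DI

namespace DI

/-! ### Derivability is a preorder compatible with contexts -/

theorem Equiv.fill {P Q : F} (C : Ctx) (h : Equiv P Q) : Equiv (C.fill P) (C.fill Q) := by
  induction C with
  | hole => exact h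
  | disL C R ih => exact .disCongr ih (.refl _)
  | disR R C ih => exact .disCongr (.refl _) ih
  | conL C R ih => exact .conCongr ih (.refl _)
  | conR R C ih => exact .conCongr (.refl _) ih

/-- The composite context `C{D{ }}`. -/
def Ctx.comp : Ctx → Ctx → Ctx
  | .hole, D => D
  | .disL C Q, D => .disL (C.comp D) Q
  | .disR Q C, D => .disR Q (C.comp D)
  | .conL C Q, D => .conL (C.comp D) Q
  | .conR Q C, D => .conR Q (C.comp D)

theorem Ctx.fill_comp (C D : Ctx) (P : F) : (C.comp D).fill P = C.fill (D.fill P) := by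
  induction C <;> simp_all [Ctx.comp, Ctx.fill]

section
variable {Rs : Set Rule} {P P' Q Q' R : F}

theorem Deriv.eqv_trans (h : Equiv P Q) (d : Deriv (Step Rs) Q R) : Deriv (Step Rs) P R := by
  cases d with
  | eqv e => exact .eqv (h.trans e)
  | step s d =>
    obtain ⟨r, hr, C, P', Q', hs, h₁, h₂⟩ := s
    exact .step ⟨r, hr, C, P', Q', hs, h.trans h₁, h₂⟩ d

theorem Deriv.trans (d : Deriv (Step Rs) P Q) (e : Deriv (Step Rs) Q R) :
    Deriv (Step Rs) P R := by
  induction d with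
  | eqv h => exact e.eqv_trans h
  | step s _ ih => exact .step s (ih e)

theorem Deriv.trans_eqv (d : Deriv (Step Rs) P Q) (h : Equiv Q R) : Deriv (Step Rs) P R :=
  d.trans (.eqv h)

theorem Deriv.root {r : Rule} (hr : r ∈ Rs) (h : RootStep r P Q) : Deriv (Step Rs) P Q :=
  .step ⟨r, hr, .hole, P, Q, h, .refl _, .refl _⟩ (.eqv (.refl _))

theorem Deriv.fill (C : Ctx) (d : Deriv (Step Rs) P Q) :
    Deriv (Step Rs) (C.fill P) (C.fill Q) := by
  induction d with
  | eqv h => exact .eqv (h.fill C)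
  | step s _ ih =>
    obtain ⟨r, hr, D, P', Q', hs, h₁, h₂⟩ := s
    refine .step ⟨r, hr, C.comp D, P', Q', hs, ?_, ?_⟩ ih
    · simpa only [Ctx.fill_comp] using h₁.fill C
    · simpa only [Ctx.fill_comp] using h₂.fill C

theorem Deriv.dis (d : Deriv (Step Rs) P P') (e : Deriv (Step Rs) Q Q') :
    Deriv (Step Rs) (.dis P Q) (.dis P' Q') :=
  (d.fill (.disL .hole Q)).trans (e.fill (.disR P' .hole))

theorem Deriv.con (d : Deriv (Step Rs) P P') (e : Deriv (Step Rs) Q Q') :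
    Deriv (Step Rs) (.con P Q) (.con P' Q') :=
  (d.fill (.conL .hole Q)).trans (e.fill (.conR P' .hole))

end

/-- A rule is derivable as soon as its instances in the empty context are. -/
theorem RuleDerivable.of_root {r : Rule} {Rs : Set Rule}
    (h : ∀ P Q, RootStep r P Q → Deriv (Step Rs) P Q) : RuleDerivable r Rs := by
  rintro P Q ⟨r', hr', C, P', Q', hs, h₁, h₂⟩
  obtain rfl : r' = r := hr'
  exact (((h P' Q' hs).fill C).eqv_trans h₁).trans_eqv h₂

theorem Equiv.disDisComm (P Q R S : F) :
    Equiv (.dis (.dis P Q) (.dis R S)) (.dis (.dis P R) (.dis Q S)) :=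
  (Equiv.disAssoc P Q _).trans <| (Equiv.disCongr (.refl P) <|
    (Equiv.disAssoc Q R S).symm.trans <| (Equiv.disCongr (.disComm Q R) (.refl S)).trans <|
      .disAssoc R Q S).trans (Equiv.disAssoc P R _).symm

theorem Equiv.conConComm (P Q R S : F) :
    Equiv (.con (.con P Q) (.con R S)) (.con (.con P R) (.con Q S)) :=
  (Equiv.conAssoc P Q _).trans <| (Equiv.conCongr (.refl P) <|
    (Equiv.conAssoc Q R S).symm.trans <| (Equiv.conCongr (.conComm Q R) (.refl S)).trans <|
      .conAssoc R Q S).trans (Equiv.conAssoc P R _).symm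

/-! ### Interaction -/

theorem Deriv.switch_dis {Rs : Set Rule} (hs : Rule.s ∈ Rs) (A B C D : F) :
    Deriv (Step Rs) (.con (.dis A B) (.dis C D)) (.dis (.dis A C) (.con B D)) := by
  have h₁ : Deriv (Step Rs) (.con (.dis A B) (.dis C D)) (.dis (.con (.dis A B) D) C) :=
    (Deriv.root hs (.s (.dis A B) D C)).eqv_trans (.conCongr (.refl _) (.disComm _ _))
  have h₂ : Deriv (Step Rs) (.con (.dis A B) D) (.dis (.con D B) A) :=
    (Deriv.root hs (.s D B A)).eqv_trans
      ((Equiv.conComm _ _).trans (.conCongr (.refl _) (.disComm _ _)))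
  refine (h₁.trans (h₂.dis (.eqv (.refl C)))).trans_eqv ?_
  exact (Equiv.disAssoc _ _ _).trans ((Equiv.disComm _ _).trans
    (.disCongr (.refl _) (.conComm _ _)))

theorem Deriv.switch_con {Rs : Set Rule} (hs : Rule.s ∈ Rs) (A B C D : F) :
    Deriv (Step Rs) (.con (.dis A B) (.con C D)) (.dis (.con A C) (.con B D)) := by
  have h₁ : Deriv (Step Rs) (.con C (.dis A B)) (.dis (.con C A) B) := .root hs (.s C A B)
  have h₂ : Deriv (Step Rs) (.con D (.dis (.con C A) B)) (.dis (.con D B) (.con C A)) :=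
    (Deriv.root hs (.s D B (.con C A))).eqv_trans (.conCongr (.refl _) (.disComm _ _))
  refine ((((Deriv.eqv (.refl D)).con h₁).trans h₂).eqv_trans ?_).trans_eqv ?_
  · exact (Equiv.conAssoc _ _ _).symm.trans ((Equiv.conComm _ _).trans
      (.conCongr (.refl _) (.conComm _ _)))
  · exact (Equiv.disComm _ _).trans (.disCongr (.conComm _ _) (.conComm _ _))

theorem deriv_iDown (P : F) : Deriv (Step {.aiDown, .s}) .tt (.dis P P.negF) := by
  induction P with
  | tt => exact .eqv ((Equiv.ffDis .tt).symm.trans (.disComm _ _))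
  | ff => exact .eqv (Equiv.ffDis .tt).symm
  | pos a => exact .root (by simp) (.aiDown (.pos a) trivial)
  | neg a => exact .root (by simp) (.aiDown (.neg a) trivial)
  | dis P Q ihP ihQ =>
    exact ((ihP.con ihQ).trans (.switch_dis (by simp) _ _ _ _)).eqv_trans (Equiv.ttCon _).symm
  | con P Q ihP ihQ =>
    have ihP' := ihP.trans_eqv (.disComm _ _)
    have ihQ' := ihQ.trans_eqv (.disComm _ _)
    exact (((ihP'.con ihQ').trans (.switch_dis (by simp) _ _ _ _)).eqv_trans
      (Equiv.ttCon _).symm).trans_eqv (.disComm _ _)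

theorem deriv_iUp (P : F) : Deriv (Step {.aiUp, .s}) (.con P P.negF) .ff := by
  induction P with
  | tt => exact .eqv (.ttCon _)
  | ff => exact .eqv ((Equiv.conComm _ _).trans (.ttCon _))
  | pos a => exact .root (by simp) (.aiUp (.pos a) trivial)
  | neg a => exact .root (by simp) (.aiUp (.neg a) trivial)
  | dis P Q ihP ihQ =>
    exact ((Deriv.switch_con (by simp) _ _ _ _).trans (ihP.dis ihQ)).trans_eqv (.ffDis _)
  | con P Q ihP ihQ =>
    have ihP' := ihP.eqv_trans (.conComm _ _)
    have ihQ' := ihQ.eqv_trans (.conComm _ _)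
    exact (((Deriv.switch_con (by simp) _ _ _ _).trans (ihP'.dis ihQ')).eqv_trans
      (.conComm _ _)).trans_eqv (.ffDis _)

/-! ### Weakening -/

/-- The switch instance `(f,[t,t]) ⟶ [(f,t),t]` leads from `f` to `t`. -/
theorem Deriv.ff_tt {Rs : Set Rule} (hs : Rule.s ∈ Rs) : Deriv (Step Rs) .ff .tt := by
  refine ((Deriv.root hs (.s .ff .tt .tt)).eqv_trans ?_).trans_eqv ?_
  · exact ((Equiv.conComm _ _).trans
      ((Equiv.conCongr .ttDis (.refl _)).trans (.ttCon _))).symm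
  · exact (Equiv.disCongr ((Equiv.conComm _ _).trans (.ttCon _)) (.refl _)).trans (.ffDis _)

theorem deriv_wDown (P : F) : Deriv (Step {.awDown, .s}) .ff P := by
  induction P with
  | tt => exact .ff_tt (by simp)
  | ff => exact .eqv (.refl _)
  | pos a => exact .root (by simp) (.awDown (.pos a) trivial)
  | neg a => exact .root (by simp) (.awDown (.neg a) trivial)
  | dis P Q ihP ihQ => exact (ihP.dis ihQ).eqv_trans (Equiv.ffDis _).symm
  | con P Q ihP ihQ => exact (ihP.con ihQ).eqv_trans Equiv.ffCon.symm

theorem deriv_wUp (P : F) : Deriv (Step {.awUp, .s}) P .tt := by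
  induction P with
  | tt => exact .eqv (.refl _)
  | ff => exact .ff_tt (by simp)
  | pos a => exact .root (by simp) (.awUp (.pos a) trivial)
  | neg a => exact .root (by simp) (.awUp (.neg a) trivial)
  | dis P Q ihP ihQ => exact (ihP.dis ihQ).trans_eqv .ttDis
  | con P Q ihP ihQ => exact (ihP.con ihQ).trans_eqv (.ttCon _)

/-! ### Contraction -/

theorem deriv_cDown (P : F) : Deriv (Step {.acDown, .m}) (.dis P P) P := by
  induction P with
  | tt => exact .eqv .ttDis
  | ff => exact .eqv (.ffDis _)
  | pos a => exact .root (by simp) (.acDown (.pos a) trivial)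
  | neg a => exact .root (by simp) (.acDown (.neg a) trivial)
  | dis P Q ihP ihQ => exact (ihP.dis ihQ).eqv_trans (.disDisComm _ _ _ _)
  | con P Q ihP ihQ => exact (Deriv.root (by simp) (.m P Q P Q)).trans (ihP.con ihQ)

theorem deriv_cUp (P : F) : Deriv (Step {.acUp, .m}) P (.con P P) := by
  induction P with
  | tt => exact .eqv (Equiv.ttCon _).symm
  | ff => exact .eqv Equiv.ffCon.symm
  | pos a => exact .root (by simp) (.acUp (.pos a) trivial)
  | neg a => exact .root (by simp) (.acUp (.neg a) trivial)
  | dis P Q ihP ihQ => exact (ihP.dis ihQ).trans (.root (by simp) (.m P P Q Q))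
  | con P Q ihP ihQ => exact (ihP.con ihQ).trans_eqv (.conConComm _ _ _ _)

/-- reduction of the general rules of SKSg to atomic form.
`i↓` is derivable from `{ai↓, s}`, `w↓` from `{aw↓, s}`, `c↓` from
`{ac↓, m}`; dually, `i↑` is derivable from `{ai↑, s}`, `w↑` from `{aw↑, s}`
and `c↑` from `{ac↑, m}`. -/
theorem sksg_rules_atomic :
    RuleDerivable .iDown {.aiDown, .s} ∧
    RuleDerivable .wDown {.awDown, .s} ∧
    RuleDerivable .cDown {.acDown, .m} ∧
    RuleDerivable .iUp {.aiUp, .s} ∧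
    RuleDerivable .wUp {.awUp, .s} ∧
    RuleDerivable .cUp {.acUp, .m} := by
  refine ⟨.of_root ?_, .of_root ?_, .of_root ?_, .of_root ?_, .of_root ?_, .of_root ?_⟩
  · rintro _ _ ⟨⟩
    exact deriv_iDown _
  · rintro _ _ ⟨⟩
    exact deriv_wDown _
  · rintro _ _ ⟨⟩
    exact deriv_cDown _
  · rintro _ _ ⟨⟩
    exact deriv_iUp _
  · rintro _ _ ⟨⟩
    exact deriv_wUp _
  · rintro _ _ ⟨⟩
    exact deriv_cUp _

end DI
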